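/- For all tuples x, y over Σ and indices l, j with 1 ≤ l ≤ rk(x) and 1 ≤ j ≤ rk(x) + rk(y) − 1, the j-th bridge of x ⊙_l y satisfies: (x ⊙_l y)̂^j = x̂^j ⊙_{l−1} y if j < l; (x ⊙_l y)̂^j = x ⊙_l ŷ^{j−l+1} if l ≤ j < l + rk(y); and (x ⊙_l y)̂^j = x̂^{j − rk(y) + 1} ⊙_l y if j ≥ l + rk(y). -/

import Mathlib

/- A tuple over alphabet `α` is modeled as a nonempty `List (List α)`;
components are words `List α`. -/

/-- Rank of a tuple: number of components minus one. -/
def TupRk {α : Type*} (x : List (List α)) : ℕ := x.length - 1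

/-- Concatenation of tuples:
`(x₀,…,x_i)·(y₀,…,y_j) = (x₀,…,x_{i−1}, x_i y₀, y₁,…,y_j)`. -/
def TupConc {α : Type*} (x y : List (List α)) : List (List α) :=
  x.dropLast ++ (x.getLastD [] ++ y.headD []) :: y.tail

/-- Intercalation `x ⊙_l y`: substitutes the tuple `y` into the `l`-th gap of `x`,
`(x₀,…,x_i) ⊙_l (y₀,…,y_j) = (x₀,…,x_{l−2}, x_{l−1}y₀, y₁,…,y_{j−1}, y_j x_l, x_{l+1},…,x_i)`. -/
def TupInter {α : Type*} (x : List (List α)) (l : ℕ) (y : List (List α)) : List (List α) :=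
  TupConc (TupConc (x.take l) y) (x.drop l)

/-- The `j`-th bridge of a tuple: removes the `j`-th gap by fusing components
`u_{j-1}` and `u_j`. -/
def TupBridge {α : Type*} (u : List (List α)) (j : ℕ) : List (List α) :=
  TupConc (u.take j) (u.drop j)

/-! Concatenation of tuples is associative. If `u` and `v` are consecutive blocks of components,
then closing the gap between them turns `u ++ v` into `u · v`, while intercalating `y` into that gap
turns it into `u · y · v`. Cut `x` (and, in the middle case, `y`) at the gaps involved: the two
sides of each identity are then the same product of four blocks, bracketed differently. -/

section

variable {α : Type*} {v x y : List (List α)} {k l : ℕ}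

theorem exists_eq_append_of_le_length {β : Type*} {s : List β} {n : ℕ} (hn : n ≤ s.length) :
    ∃ a b, s = a ++ b ∧ a.length = n :=
  ⟨s.take n, s.drop n, (List.take_append_drop n s).symm, List.length_take_of_le hn⟩

theorem tupConc_ne_nil (u v : List (List α)) : TupConc u v ≠ [] :=
  List.append_ne_nil_of_right_ne_nil _ (List.cons_ne_nil _ _)

theorem length_tupConc (u v : List (List α)) :
    (TupConc u v).length = TupRk u + TupRk v + 1 := by
  simp only [TupConc, TupRk, List.length_append, List.length_dropLast, List.length_cons,
    List.length_tail, Nat.add_assoc]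

theorem append_tupConc (u : List (List α)) (hv : v ≠ []) (w : List (List α)) :
    TupConc (u ++ v) w = u ++ TupConc v w := by
  obtain ⟨v, p, rfl⟩ := (List.eq_nil_or_concat v).resolve_left hv
  simp [TupConc, ← List.append_assoc]

theorem tupConc_append (u : List (List α)) (hv : v ≠ []) (w : List (List α)) :
    TupConc u (v ++ w) = TupConc u v ++ w := by
  obtain ⟨q, v, rfl⟩ := List.exists_cons_of_ne_nil hv
  simp [TupConc]

theorem tupConc_assoc (u v w : List (List α)) :
    TupConc (TupConc u v) w = TupConc u (TupConc v w) := by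
  match v with
  | [] => simp [TupConc]
  | [q] => simp [TupConc]
  | q :: r :: v =>
    have hq : [q] ≠ [] := List.cons_ne_nil _ _
    have hv : r :: v ≠ [] := List.cons_ne_nil _ _
    rw [← List.singleton_append, tupConc_append u hq, append_tupConc _ hv, append_tupConc _ hv,
      tupConc_append u hq]

theorem tupBridge_append {u : List (List α)} (hu : u.length = k) (v : List (List α)) :
    TupBridge (u ++ v) k = TupConc u v := by
  rw [TupBridge, List.take_left' hu, List.drop_left' hu]

theorem tupInter_append {u : List (List α)} (hu : u.length = l) (v y : List (List α)) :
    TupInter (u ++ v) l y = TupConc (TupConc u y) v := by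
  rw [TupInter, List.take_left' hu, List.drop_left' hu]

theorem tupBridge_tupInter_of_lt (y : List (List α)) (hk : 1 ≤ k) (hkl : k < l)
    (hl : l ≤ x.length) :
    TupBridge (TupInter x l y) k = TupInter (TupBridge x k) (l - 1) y := by
  obtain ⟨ab, c, rfl, hab⟩ := exists_eq_append_of_le_length hl
  obtain ⟨a, b, rfl, ha⟩ := exists_eq_append_of_le_length (hab ▸ hkl.le)
  have hlen : a.length + b.length = l := List.length_append ▸ hab
  have hb : b ≠ [] := List.ne_nil_of_length_pos (by omega)
  have hconc : (TupConc a b).length = l - 1 := by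
    simp only [length_tupConc, TupRk]; omega
  calc TupBridge (TupInter (a ++ b ++ c) l y) k
      = TupBridge (a ++ TupConc (TupConc b y) c) k := by
        rw [tupInter_append hab, append_tupConc a hb, append_tupConc a (tupConc_ne_nil b y)]
    _ = TupConc a (TupConc (TupConc b y) c) := tupBridge_append ha _
    _ = TupConc (TupConc (TupConc a b) y) c := by simp only [tupConc_assoc]
    _ = TupInter (TupConc a b ++ c) (l - 1) y := (tupInter_append hconc c y).symm
    _ = TupInter (TupBridge (a ++ b ++ c) k) (l - 1) y := by
        rw [List.append_assoc, tupBridge_append ha, tupConc_append a hb]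

theorem tupBridge_tupInter_add (hl : 1 ≤ l) (hlx : l ≤ x.length) (hk : k < TupRk y) :
    TupBridge (TupInter x l y) (l + k) = TupInter x l (TupBridge y (k + 1)) := by
  have hky : k + 1 < y.length := Nat.add_lt_of_lt_sub hk
  obtain ⟨a, b, rfl, ha⟩ := exists_eq_append_of_le_length hlx
  obtain ⟨c, d, rfl, hc⟩ := exists_eq_append_of_le_length hky.le
  have hc' : c ≠ [] := List.ne_nil_of_length_eq_add_one hc
  have hd : d ≠ [] := by
    rintro rfl
    exact hky.ne' (by rw [List.append_nil, hc])
  have hconc : (TupConc a c).length = l + k := by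
    simp only [length_tupConc, TupRk]; omega
  calc TupBridge (TupInter (a ++ b) l (c ++ d)) (l + k)
      = TupBridge (TupConc a c ++ TupConc d b) (l + k) := by
        rw [tupInter_append ha, tupConc_append a hc', append_tupConc _ hd]
    _ = TupConc (TupConc a c) (TupConc d b) := tupBridge_append hconc _
    _ = TupConc (TupConc a (TupConc c d)) b := by simp only [tupConc_assoc]
    _ = TupInter (a ++ b) l (TupConc c d) := (tupInter_append ha b _).symm
    _ = TupInter (a ++ b) l (TupBridge (c ++ d) (k + 1)) := by rw [tupBridge_append hc]

theorem tupBridge_tupInter_add_tupRk (y : List (List α)) (hl : 1 ≤ l) (hlk : l ≤ k)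
    (hk : k < x.length) :
    TupBridge (TupInter x l y) (k + TupRk y) = TupInter (TupBridge x (k + 1)) l y := by
  obtain ⟨ab, c, rfl, hab⟩ := exists_eq_append_of_le_length (Nat.succ_le_of_lt hk)
  obtain ⟨a, b, rfl, ha⟩ := exists_eq_append_of_le_length (hab ▸ Nat.le_succ_of_le hlk)
  have hlen : a.length + b.length = k + 1 := List.length_append ▸ hab
  have hb : b ≠ [] := List.ne_nil_of_length_pos (by omega)
  have hconc : (TupConc (TupConc a y) b).length = k + TupRk y := by
    simp only [length_tupConc, TupRk]; omega
  calc TupBridge (TupInter (a ++ b ++ c) l y) (k + TupRk y)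
      = TupBridge (TupConc (TupConc a y) b ++ c) (k + TupRk y) := by
        rw [List.append_assoc, tupInter_append ha, tupConc_append _ hb]
    _ = TupConc (TupConc (TupConc a y) b) c := tupBridge_append hconc c
    _ = TupConc (TupConc a y) (TupConc b c) := tupConc_assoc _ _ _
    _ = TupInter (a ++ TupConc b c) l y := (tupInter_append ha _ y).symm
    _ = TupInter (TupBridge (a ++ b ++ c) (k + 1)) l y := by
        rw [tupBridge_append hab, append_tupConc a hb]

end

/-- Bridges of an intercalation `x ⊙_l y`, in the three cases `j < l`,
`l ≤ j < l + rk y` and `j ≥ l + rk y`. -/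
theorem tupBridge_inter {α : Type*} (x y : List (List α)) (l j : ℕ)
    (hx : x ≠ []) (hy : y ≠ [])
    (hl1 : 1 ≤ l) (hl2 : l ≤ TupRk x)
    (hj1 : 1 ≤ j) (hj2 : j ≤ TupRk x + TupRk y - 1) :
    (j < l → TupBridge (TupInter x l y) j = TupInter (TupBridge x j) (l - 1) y) ∧
    (l ≤ j → j < l + TupRk y →
      TupBridge (TupInter x l y) j = TupInter x l (TupBridge y (j - l + 1))) ∧
    (l + TupRk y ≤ j →
      TupBridge (TupInter x l y) j = TupInter (TupBridge x (j - TupRk y + 1)) l y) := by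
  have hlx : l < x.length := Nat.lt_of_le_sub_one (List.length_pos_of_ne_nil hx) hl2
  refine ⟨fun hjl => tupBridge_tupInter_of_lt y hj1 hjl hlx.le, fun hlj hjy => ?_, fun hlj => ?_⟩
  · obtain ⟨k, rfl⟩ := Nat.exists_eq_add_of_le hlj
    rw [tupBridge_tupInter_add hl1 hlx.le (Nat.lt_of_add_lt_add_left hjy), Nat.add_sub_cancel_left]
  · obtain ⟨k, rfl⟩ := Nat.exists_eq_add_of_le' (le_of_add_le_right hlj)
    have hkx : k < TupRk x := by omega
    rw [tupBridge_tupInter_add_tupRk y hl1 (Nat.le_of_add_le_add_right hlj)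
      (hkx.trans_le (Nat.sub_le _ _)), Nat.add_sub_cancel]
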